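/- arXiv:1810.06864 — 2 statements merged into one kernel-verified Lean document; each statement's English description precedes it below -/
import Mathlib

section
/- For every finite graph G and every positive integer k, there exists a rooted compact tree decomposition (T,β) of G such that every adhesion of (T,β) has at most k vertices and, for every node t of T and every integer i with 1 ≤ i ≤ k, the bag β(t) is (i,i)-unbreakable in G. -/
/-- A separation of a graph `G`: a pair `(A,B)` of vertex sets covering `V(G)` such that
no edge of `G` has one endpoint in `A \ B` and the other in `B \ A`. -/
def IsSeparation {V : Type} (G : SimpleGraph V) (A B : Set V) : Prop :=
  A ∪ B = Set.univ ∧ ∀ u v : V, G.Adj u v → u ∈ A \ B → v ∉ B \ A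

/-- `S` is `(q,k)`-unbreakable in `G`: every separation of order at most `k`
has at most `q` vertices of `S` on one of its sides. -/
def IsUnbreakable {V : Type} (G : SimpleGraph V) (S : Set V) (q k : ℕ) : Prop :=
  ∀ A B : Set V, IsSeparation G A B → (A ∩ B).ncard ≤ k →
    (A ∩ S).ncard ≤ q ∨ (B ∩ S).ncard ≤ q

/-- `s` is an ancestor of `t` (possibly `s = t`) with respect to the parent map. -/
def IsAncestor {ι : Type} (parent : ι → ι) (s t : ι) : Prop :=
  ∃ n : ℕ, parent^[n] t = s

/-- `s` lies on the (unique) path between `t₁` and `t₂` in the rooted tree given by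
`parent`: `s` is an ancestor of `t₁` or of `t₂`, and every common ancestor of
`t₁` and `t₂` is an ancestor of `s`. -/
def OnTreePath {ι : Type} (parent : ι → ι) (s t₁ t₂ : ι) : Prop :=
  (IsAncestor parent s t₁ ∨ IsAncestor parent s t₂) ∧
    ∀ u : ι, IsAncestor parent u t₁ → IsAncestor parent u t₂ → IsAncestor parent u s

/-- A rooted tree decomposition of `G`, given by a rooted tree on node type `ι`
(encoded by a root and a parent map under which every node reaches the root)
together with bags `β`: bags cover all vertices and all edges, and for every
vertex `v` the set of nodes whose bag contains `v` is connected in the tree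
(i.e. closed under taking nodes on paths between two such nodes). -/
structure IsRootedTreeDecomp {V ι : Type} (G : SimpleGraph V) (root : ι)
    (parent : ι → ι) (β : ι → Set V) : Prop where
  parent_root : parent root = root
  reaches_root : ∀ t : ι, ∃ n : ℕ, parent^[n] t = root
  exists_bag : ∀ v : V, ∃ t : ι, v ∈ β t
  adj_bag : ∀ u v : V, G.Adj u v → ∃ t : ι, u ∈ β t ∧ v ∈ β t
  bag_connected : ∀ (v : V) (t₁ t₂ s : ι), v ∈ β t₁ → v ∈ β t₂ →
    OnTreePath parent s t₁ t₂ → v ∈ β s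

/-- The (open) neighborhood of a vertex set `X` in `G`. -/
def nbhd {V : Type} (G : SimpleGraph V) (X : Set V) : Set V :=
  {v | v ∉ X ∧ ∃ u ∈ X, G.Adj u v}

/-- `γ(t)`: union of the bags of `t` and all its descendants. -/
def gammaSet {V ι : Type} (parent : ι → ι) (β : ι → Set V) (t : ι) : Set V :=
  {v | ∃ s : ι, IsAncestor parent t s ∧ v ∈ β s}

/-- `α(t) = γ(t) \ σ(t)`, where for a non-root node `t` the adhesion is
`σ(t) = β(t) ∩ β(parent t)`. -/
def alphaSet {V ι : Type} (parent : ι → ι) (β : ι → Set V) (t : ι) : Set V :=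
  gammaSet parent β t \ (β t ∩ β (parent t))

/-- Compactness of a rooted tree decomposition: for every non-root node `t`,
`G[α(t)]` is connected and `N_G(α(t)) = σ(t)`. -/
def IsCompactRTD {V ι : Type} (G : SimpleGraph V) (root : ι) (parent : ι → ι)
    (β : ι → Set V) : Prop :=
  ∀ t : ι, t ≠ root → (G.induce (alphaSet parent β t)).Connected ∧
    nbhd G (alphaSet parent β t) = β t ∩ β (parent t)

/-!
Start from the decomposition with a single bag. As long as some bag is not `(i, i)`-unbreakable for
some `i ≤ k`, reroot the decomposition there and pick, among the separations `(A, B)` of order at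
most `k` with more vertices of that bag than of the separator on both sides, one whose separator has
the least total depth. Replace the tree by two copies joined at their roots, restrict the bags of
one to `A` and of the other to `B`, and add each separator vertex to all bags above its topmost bag.

This costs nothing by an exchange argument. If a set `F` of vertices below the root bag contained at
least as many separator vertices as its neighborhood has outside `A`, then moving `F` to the side
`A` would replace the former by the latter, which lie higher in the tree, against the choice of
`(A, B)`. So in each adhesion the added separator vertices are at most as many as the vertices that
are lost on either side, and in each bag they are strictly fewer unless there are none. Hence
adhesions stay bounded by `k`, and each bag either is kept in one copy and shrinks to a part of the
separator in the other, or shrinks in both copies, as the root bag does; the multiset of bag sizes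
decreases in the Dershowitz–Manna order, and the process ends.

Finally replace every node `t` other than the root by the components of `G[α(t)]`. Bags and
adhesions only shrink, and subsets of unbreakable sets are unbreakable.
-/

lemma finsum_mem_lt_finsum_mem_of_ncard_le {α : Type*} [Finite α] {d : α → ℕ}
    {X Z : Set α} {m : ℕ} (hcard : Z.ncard ≤ X.ncard) (hX : X.Nonempty) (hZm : ∀ v ∈ Z, d v ≤ m)
    (hmX : ∀ v ∈ X, m < d v) : ∑ᶠ v ∈ Z, d v < ∑ᶠ v ∈ X, d v := by
  lift X to Finset α using X.toFinite
  lift Z to Finset α using Z.toFinite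
  rw [finsum_mem_coe_finset, finsum_mem_coe_finset]
  rw [Set.ncard_coe_finset, Set.ncard_coe_finset] at hcard
  calc ∑ v ∈ Z, d v ≤ Z.card • m := Finset.sum_le_card_nsmul Z d m hZm
    _ ≤ X.card • m := Nat.mul_le_mul_right m hcard
    _ = ∑ _v ∈ X, m := Finset.sum_const m |>.symm
    _ < ∑ v ∈ X, d v := Finset.sum_lt_sum_of_nonempty hX hmX

section Separation

variable {V : Type} {G : SimpleGraph V} {A B S : Set V} {k : ℕ} {d : V → ℕ}

namespace IsSeparation

lemma mem_or_mem (h : IsSeparation G A B) (v : V) : v ∈ A ∨ v ∈ B :=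
  h.1.ge (Set.mem_univ v)

protected lemma symm (h : IsSeparation G A B) : IsSeparation G B A :=
  ⟨Set.union_comm A B ▸ h.1, fun u v huv hu hv => h.2 v u huv.symm hv hu⟩

/-- Moving `F` entirely to the first side forces its neighborhood into the separator. -/
lemma absorb (h : IsSeparation G A B) (F : Set V) :
    IsSeparation G (A ∪ F ∪ nbhd G F) (B \ F) := by
  refine ⟨Set.eq_univ_of_forall fun v => ?_, fun u v huv hu hv => ?_⟩
  · have := h.mem_or_mem v
    simp only [Set.mem_union, Set.mem_sdiff]
    tauto
  · have hsep := h.2 u v huv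
    have hF : u ∈ F → v ∉ F → v ∈ nbhd G F := fun hu hv => ⟨hv, u, hu, huv⟩
    have hN : u ∈ nbhd G F → u ∉ F := And.left
    have := h.mem_or_mem u
    simp only [Set.mem_union, Set.mem_sdiff] at hu hv hsep
    tauto

lemma absorb_inter (h : IsSeparation G A B) (F : Set V) :
    (A ∪ F ∪ nbhd G F) ∩ (B \ F) = (A ∩ B) \ F ∪ nbhd G F \ A := by
  ext v
  have := h.mem_or_mem v
  have hN : v ∈ nbhd G F → v ∉ F := And.left
  simp only [Set.mem_inter_iff, Set.mem_union, Set.mem_sdiff]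
  tauto

end IsSeparation

/-- The separation `(A, B)` shows that `S` is not `(i, i)`-unbreakable, where `i ≤ k` is its
order. -/
structure IsBreaking (G : SimpleGraph V) (k : ℕ) (S A B : Set V) : Prop where
  isSeparation : IsSeparation G A B
  order_le : (A ∩ B).ncard ≤ k
  lt_left : (A ∩ B).ncard < (A ∩ S).ncard
  lt_right : (A ∩ B).ncard < (B ∩ S).ncard

namespace IsBreaking

protected lemma symm (h : IsBreaking G k S A B) : IsBreaking G k S B A where
  isSeparation := h.isSeparation.symm
  order_le := Set.inter_comm A B ▸ h.order_le
  lt_left := Set.inter_comm A B ▸ h.lt_right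
  lt_right := Set.inter_comm A B ▸ h.lt_left

lemma ncard_inter_lt [Finite V] (h : IsBreaking G k S A B) : (A ∩ B).ncard < S.ncard :=
  h.lt_left.trans_le (Set.ncard_le_ncard Set.inter_subset_right)

lemma not_subset_left [Finite V] (h : IsBreaking G k S A B) : ¬ S ⊆ A := fun hS =>
  h.lt_right.not_ge (Set.ncard_le_ncard fun _ hv => ⟨hS hv.2, hv.1⟩)

end IsBreaking

lemma isUnbreakable_of_forall_not_isBreaking {i : ℕ} (hik : i ≤ k)
    (h : ∀ A B, ¬ IsBreaking G k S A B) : IsUnbreakable G S i i := by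
  intro A B hsep hi
  by_contra! hlt
  exact h A B ⟨hsep, hi.trans hik, hi.trans_lt hlt.1, hi.trans_lt hlt.2⟩

lemma IsUnbreakable.mono [Finite V] {S' : Set V} {q : ℕ} (h : IsUnbreakable G S q k)
    (hS : S' ⊆ S) : IsUnbreakable G S' q k := fun A B hsep hk =>
  (h A B hsep hk).imp
    (Set.ncard_le_ncard (Set.inter_subset_inter_right A hS)).trans
    (Set.ncard_le_ncard (Set.inter_subset_inter_right B hS)).trans

/-- A breaking separation whose separator has the least total weight. -/
structure IsLeastBreaking (G : SimpleGraph V) (k : ℕ) (S : Set V) (d : V → ℕ) (A B : Set V) : Prop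
    extends IsBreaking G k S A B where
  weight_le : ∀ A' B', IsBreaking G k S A' B' → ∑ᶠ v ∈ A ∩ B, d v ≤ ∑ᶠ v ∈ A' ∩ B', d v

lemma IsBreaking.exists_isLeastBreaking (h : IsBreaking G k S A B) (d : V → ℕ) :
    ∃ A' B', IsLeastBreaking G k S d A' B' := by
  obtain ⟨⟨A', B'⟩, hbr, hmin⟩ := exists_minimalFor_of_wellFoundedLT
    (fun p : Set V × Set V => IsBreaking G k S p.1 p.2) (fun p => ∑ᶠ v ∈ p.1 ∩ p.2, d v)
    ⟨(A, B), h⟩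
  exact ⟨A', B', hbr, fun A'' B'' h'' => le_of_not_gt fun hlt =>
    hlt.not_ge (hmin (j := (A'', B'')) h'' hlt.le)⟩

protected lemma IsLeastBreaking.symm (h : IsLeastBreaking G k S d A B) :
    IsLeastBreaking G k S d B A :=
  ⟨h.toIsBreaking.symm, Set.inter_comm A B ▸ h.weight_le⟩

/-- Otherwise absorbing `F` would yield a breaking separation with a lighter separator. -/
lemma IsLeastBreaking.ncard_inter_lt_ncard_nbhd_sdiff [Finite V] (h : IsLeastBreaking G k S d A B)
    {F : Set V} {m : ℕ} (hFS : Disjoint F S) (hNm : ∀ v ∈ nbhd G F, d v ≤ m)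
    (hmF : ∀ v ∈ F, m < d v) (hne : (A ∩ B ∩ F).Nonempty) :
    (A ∩ B ∩ F).ncard < (nbhd G F \ A).ncard := by
  by_contra! hle
  have hdisj : Disjoint ((A ∩ B) \ F) (nbhd G F \ A) :=
    Set.disjoint_left.2 fun v hv hv' => hv'.2 hv.1.1
  have horder : ((A ∪ F ∪ nbhd G F) ∩ (B \ F)).ncard ≤ (A ∩ B).ncard := by
    have hsum := Set.ncard_inter_add_ncard_sdiff_eq_ncard (A ∩ B) F
    rw [h.isSeparation.absorb_inter, Set.ncard_union_eq hdisj]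
    lia
  have hleft : A ∩ S ⊆ (A ∪ F ∪ nbhd G F) ∩ S :=
    Set.inter_subset_inter_left S (Set.subset_union_left.trans Set.subset_union_left)
  have hright : B ∩ S ⊆ (B \ F) ∩ S :=
    fun v hv => ⟨⟨hv.1, hFS.notMem_of_mem_right hv.2⟩, hv.2⟩
  have hbr : IsBreaking G k S (A ∪ F ∪ nbhd G F) (B \ F) :=
    ⟨h.isSeparation.absorb F, horder.trans h.order_le,
      (horder.trans_lt h.lt_left).trans_le (Set.ncard_le_ncard hleft),
      (horder.trans_lt h.lt_right).trans_le (Set.ncard_le_ncard hright)⟩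
  refine (h.weight_le _ _ hbr).not_gt ?_
  calc ∑ᶠ v ∈ (A ∪ F ∪ nbhd G F) ∩ (B \ F), d v
      = ∑ᶠ v ∈ (A ∩ B) \ F, d v + ∑ᶠ v ∈ nbhd G F \ A, d v := by
        rw [h.isSeparation.absorb_inter, finsum_mem_union hdisj (Set.toFinite _) (Set.toFinite _)]
    _ < ∑ᶠ v ∈ (A ∩ B) \ F, d v + ∑ᶠ v ∈ A ∩ B ∩ F, d v :=
        Nat.add_lt_add_left (finsum_mem_lt_finsum_mem_of_ncard_le hle hne
          (fun v hv => hNm v hv.1) (fun v hv => hmF v hv.2)) _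
    _ = ∑ᶠ v ∈ A ∩ B, d v := by
        rw [add_comm, finsum_mem_inter_add_sdiff F (Set.toFinite (A ∩ B))]

/-- The sides of a separation `(A, B)` indexed by `Bool`, so that arguments symmetric in the two
sides can be made once. -/
def side (A B : Set V) (b : Bool) : Set V := bif b then A else B

lemma inter_subset_side (A B : Set V) (b : Bool) : A ∩ B ⊆ side A B b := by
  cases b
  exacts [Set.inter_subset_right, Set.inter_subset_left]

lemma side_inter_side_not (A B : Set V) (b : Bool) : side A B b ∩ side A B (!b) = A ∩ B := by
  cases b
  exacts [Set.inter_comm B A, rfl]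

lemma IsSeparation.mem_side_iff (h : IsSeparation G A B) {v : V} (hv : v ∉ A ∩ B) (b : Bool) :
    v ∈ side A B b ↔ b = (open Classical in decide (v ∈ A)) := by
  have := h.mem_or_mem v
  by_cases hA : v ∈ A <;> cases b <;> simp_all [side]

lemma IsSeparation.exists_mem_side_of_adj (h : IsSeparation G A B) {u v : V} (huv : G.Adj u v) :
    ∃ b, u ∈ side A B b ∧ v ∈ side A B b := by
  have huv' := h.2 u v huv
  have hvu' := h.2 v u huv.symm
  have hu := h.mem_or_mem u
  have hv := h.mem_or_mem v
  simp only [side, Bool.exists_bool, cond_true, cond_false, Set.mem_sdiff] at *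
  tauto

lemma IsLeastBreaking.side (h : IsLeastBreaking G k S d A B) (b : Bool) :
    IsLeastBreaking G k S d (side A B b) (side A B (!b)) := by
  cases b
  exacts [h.symm, h]

end Separation

section Component

variable {V : Type} {G : SimpleGraph V} {W P Q : Set V} {v : V}

lemma nbhd_subset_of_subset (h : P ⊆ Q) : nbhd G P ⊆ Q ∪ nbhd G Q := by
  rintro v ⟨-, u, hu, huv⟩
  by_cases hv : v ∈ Q
  exacts [Or.inl hv, Or.inr ⟨hv, u, h hu, huv⟩]

/-- `P` is the vertex set of a connected component of `G[W]`. -/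
def IsComponent (G : SimpleGraph V) (W P : Set V) : Prop :=
  Maximal (fun P => P ⊆ W ∧ (G.induce P).Connected) P

lemma exists_isComponent_superset [Finite V] (hPW : P ⊆ W) (hP : (G.induce P).Connected) :
    ∃ Q, P ⊆ Q ∧ IsComponent G W Q :=
  Finite.exists_le_maximal (p := fun P => P ⊆ W ∧ (G.induce P).Connected) ⟨hPW, hP⟩

lemma exists_isComponent_mem [Finite V] (hv : v ∈ W) : ∃ P, v ∈ P ∧ IsComponent G W P := by
  obtain ⟨P, hP⟩ := exists_isComponent_superset (G := G) (Set.singleton_subset_iff.2 hv)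
    ((SimpleGraph.connected_iff _).2 ⟨.of_subsingleton, inferInstance⟩)
  exact ⟨P, Set.singleton_subset_iff.1 hP.1, hP.2⟩

namespace IsComponent

lemma subset (hP : IsComponent G W P) : P ⊆ W := hP.prop.1

lemma connected (hP : IsComponent G W P) : (G.induce P).Connected := hP.prop.2

lemma subset_of_connected (hP : IsComponent G W P) (hQW : Q ⊆ W) (hQ : (G.induce Q).Connected)
    (hPQ : (P ∩ Q).Nonempty) : Q ⊆ P :=
  Set.subset_union_right.trans <| hP.le_of_ge
    ⟨Set.union_subset hP.subset hQW,
      SimpleGraph.induce_union_connected hP.connected.preconnected hQ.preconnected hPQ⟩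
    Set.subset_union_left

lemma eq_of_mem (hP : IsComponent G W P) (hQ : IsComponent G W Q) (hvP : v ∈ P) (hvQ : v ∈ Q) :
    P = Q :=
  (hQ.subset_of_connected hP.subset hP.connected ⟨v, hvQ, hvP⟩).antisymm
    (hP.subset_of_connected hQ.subset hQ.connected ⟨v, hvP, hvQ⟩)

lemma notMem_of_mem_nbhd (hP : IsComponent G W P) (hv : v ∈ nbhd G P) : v ∉ W := by
  obtain ⟨hvP, u, hu, huv⟩ := hv
  intro hvW
  have hpair : {u, v} ⊆ W := Set.pair_subset (hP.subset hu) hvW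
  have hsub := hP.subset_of_connected hpair (SimpleGraph.induce_pair_connected_of_adj huv)
    ⟨u, hu, Set.mem_insert u {v}⟩
  exact hvP (hsub (Set.mem_insert_of_mem u rfl))

end IsComponent

end Component

section DershowitzManna

variable {ι α : Type*} [Preorder α] {f : ι → α} {g : ι × Bool → α} {r : ι}

lemma exists_singleton_add_singleton_eq_add {s : ι}
    (hs : (∀ b, g (s, b) < f s) ∨ ∃ b, g (s, b) = f s ∧ g (s, !b) < f r)
    (hr : ∀ b, g (r, b) < f r) :
    ∃ X Y Z : Multiset α, ({g (s, true)} + {g (s, false)} : Multiset α) = X + Y ∧ {f s} = X + Z ∧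
      (∀ y ∈ Y, (∃ z ∈ Z, y < z) ∨ y < f r) ∧ (s = r → f r ∈ Z) := by
  rcases hs with hlt | ⟨b, hb, hb'⟩
  · refine ⟨0, {g (s, true)} + {g (s, false)}, {f s}, (zero_add _).symm, (zero_add _).symm, ?_, ?_⟩
    · simp [hlt]
    · rintro rfl
      exact Multiset.mem_singleton_self _
  · refine ⟨{f s}, {g (s, !b)}, 0, ?_, (add_zero _).symm, ?_, ?_⟩
    · cases b
      · rw [← hb, add_comm, Bool.not_false]
      · rw [← hb, Bool.not_true]
    · simp [hb']
    · rintro rfl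
      exact absurd hb (hr b).ne

/-- The disappearing element `f r` pays for each new element `g (s, !b)` that comes with an
unchanged `g (s, b)`. -/
lemma isDershowitzMannaLT_sum_singleton [Fintype ι]
    (h : ∀ s, (∀ b, g (s, b) < f s) ∨ ∃ b, g (s, b) = f s ∧ g (s, !b) < f r)
    (hr : ∀ b, g (r, b) < f r) :
    (∑ p, {g p} : Multiset α).IsDershowitzMannaLT (∑ s, {f s}) := by
  choose X Y Z hg hf hlt hZ using fun s => exists_singleton_add_singleton_eq_add (h s) hr
  have hZr : f r ∈ ∑ s, Z s := Multiset.mem_sum.2 ⟨r, Finset.mem_univ r, hZ r rfl⟩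
  refine ⟨∑ s, X s, ∑ s, Y s, ∑ s, Z s, ?_, ?_, ?_, fun y hy => ?_⟩
  · intro hzero
    exact Multiset.notMem_zero _ (hzero ▸ hZr)
  · simp only [Fintype.sum_prod_type, Fintype.sum_bool, hg, Finset.sum_add_distrib]
  · simp only [hf, Finset.sum_add_distrib]
  · obtain ⟨s, -, hys⟩ := Multiset.mem_sum.1 hy
    rcases hlt s y hys with ⟨z, hz, hyz⟩ | hyr
    · exact ⟨z, Multiset.mem_sum.2 ⟨s, Finset.mem_univ s, hz⟩, hyz⟩
    · exact ⟨f r, hZr, hyr⟩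

end DershowitzManna

section RootedTree

variable {ι : Type} {root : ι} {parent : ι → ι} {r s t : ι}

namespace IsAncestor

protected lemma refl (parent : ι → ι) (s : ι) : IsAncestor parent s s := ⟨0, rfl⟩

protected lemma trans (hrs : IsAncestor parent r s) (hst : IsAncestor parent s t) :
    IsAncestor parent r t := by
  obtain ⟨m, rfl⟩ := hrs
  obtain ⟨n, rfl⟩ := hst
  exact ⟨m + n, Function.iterate_add_apply parent m n t⟩

lemma parent_left (hst : IsAncestor parent s t) : IsAncestor parent (parent s) t :=
  IsAncestor.trans ⟨1, rfl⟩ hst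

lemma parent_right (hst : IsAncestor parent s t) (hne : s ≠ t) :
    IsAncestor parent s (parent t) := by
  obtain ⟨_ | n, rfl⟩ := hst
  exacts [absurd rfl hne, ⟨n, rfl⟩]

lemma total (hrt : IsAncestor parent r t) (hst : IsAncestor parent s t) :
    IsAncestor parent r s ∨ IsAncestor parent s r := by
  obtain ⟨m, rfl⟩ := hrt
  obtain ⟨n, rfl⟩ := hst
  rcases le_total m n with h | h
  · exact Or.inr ⟨n - m, by rw [← Function.iterate_add_apply, Nat.sub_add_cancel h]⟩
  · exact Or.inl ⟨m - n, by rw [← Function.iterate_add_apply, Nat.sub_add_cancel h]⟩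

end IsAncestor

/-- The rooted tree underlying a rooted tree decomposition, encoded as there by a parent map
fixing the root. -/
structure IsRootedTree (root : ι) (parent : ι → ι) : Prop where
  parent_root : parent root = root
  root_isAncestor : ∀ t, IsAncestor parent root t

/-- The distance of a node to the root. -/
noncomputable def treeDepth (root : ι) (parent : ι → ι) (t : ι) : ℕ :=
  sInf {n | parent^[n] t = root}

namespace IsRootedTree

lemma eq_root_of_isAncestor (h : IsRootedTree root parent) (hs : IsAncestor parent s root) :
    s = root := by
  obtain ⟨n, rfl⟩ := hs
  exact Function.iterate_fixed h.parent_root n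

lemma treeDepth_parent_lt (h : IsRootedTree root parent) (ht : t ≠ root) :
    treeDepth root parent (parent t) < treeDepth root parent t := by
  have hroot : parent^[treeDepth root parent t] t = root := Nat.sInf_mem (h.root_isAncestor t)
  cases hn : treeDepth root parent t with
  | zero => exact absurd (by rwa [hn] at hroot) ht
  | succ n =>
    rw [hn] at hroot
    exact Nat.lt_succ_of_le (Nat.sInf_le hroot)

lemma treeDepth_le (h : IsRootedTree root parent) (hst : IsAncestor parent s t) :
    treeDepth root parent s ≤ treeDepth root parent t := by
  obtain ⟨n, rfl⟩ := hst
  induction n generalizing t with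
  | zero => rfl
  | succ n ih =>
    rcases eq_or_ne t root with rfl | ht
    · rw [Function.iterate_fixed h.parent_root]
    · exact ih.trans (h.treeDepth_parent_lt ht).le

lemma treeDepth_lt (h : IsRootedTree root parent) (hst : IsAncestor parent s t) (hne : s ≠ t) :
    treeDepth root parent s < treeDepth root parent t := by
  have ht : t ≠ root := by
    rintro rfl
    exact hne (h.eq_root_of_isAncestor hst)
  exact (h.treeDepth_le (hst.parent_right hne)).trans_lt (h.treeDepth_parent_lt ht)

lemma isAncestor_antisymm (h : IsRootedTree root parent) (hst : IsAncestor parent s t)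
    (hts : IsAncestor parent t s) : s = t := by
  by_contra hne
  exact (h.treeDepth_lt hst hne).not_ge (h.treeDepth_le hts)

lemma not_isAncestor_parent (h : IsRootedTree root parent) (hs : s ≠ root) :
    ¬ IsAncestor parent s (parent s) := fun hanc =>
  (h.treeDepth_parent_lt hs).not_ge (h.treeDepth_le hanc)

end IsRootedTree

end RootedTree

/-- A rooted tree decomposition with finitely many nodes in which every vertex `v` comes with the
topmost node `top v` whose bag contains it; `mem_bag_parent` then says that the nodes whose bags
contain `v` form a subtree with root `top v`. -/
structure RootedDecomp {V : Type} (G : SimpleGraph V) where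
  Node : Type
  [fintypeNode : Fintype Node]
  root : Node
  parent : Node → Node
  bag : Node → Set V
  top : V → Node
  isRootedTree : IsRootedTree root parent
  mem_bag_top : ∀ v, v ∈ bag (top v)
  top_eq_root : ∀ {v}, v ∈ bag root → top v = root
  mem_bag_parent : ∀ {v s}, v ∈ bag s → s ≠ top v → v ∈ bag (parent s)
  exists_bag_of_adj : ∀ {u v}, G.Adj u v → ∃ t, u ∈ bag t ∧ v ∈ bag t

namespace RootedDecomp

attribute [instance] fintypeNode

section Basic

variable {V : Type} {G : SimpleGraph V} (D : RootedDecomp G) {u v : V} {r s t : D.Node}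

/-- The adhesion `σ(s)`; the value at the root is junk. -/
def adhesion (s : D.Node) : Set V := D.bag s ∩ D.bag (D.parent s)

/-- All adhesions have at most `k` vertices. -/
def AdhesionLE (k : ℕ) : Prop := ∀ s, s ≠ D.root → (D.adhesion s).ncard ≤ k

/-- The vertices occurring only in bags at or below `s`. This is `α(s)` for `s` not the root,
and everything for the root. -/
def cone (s : D.Node) : Set V := {v | IsAncestor D.parent s (D.top v)}

/-- The depth of the topmost node whose bag contains `v`. -/
noncomputable def depth (v : V) : ℕ := treeDepth D.root D.parent (D.top v)

variable {D}

lemma top_isAncestor (hv : v ∈ D.bag s) : IsAncestor D.parent (D.top v) s := by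
  obtain ⟨n, hn⟩ := D.isRootedTree.root_isAncestor s
  induction n generalizing s with
  | zero =>
    obtain rfl : s = D.root := hn
    exact D.top_eq_root hv ▸ IsAncestor.refl _ _
  | succ n ih =>
    rcases eq_or_ne s (D.top v) with rfl | hs
    · exact IsAncestor.refl _ _
    · exact (ih (D.mem_bag_parent hv hs) hn).trans ⟨1, rfl⟩

lemma mem_cone_or_mem_bag (hv : v ∈ D.bag t) (hst : IsAncestor D.parent s t) :
    v ∈ D.cone s ∨ v ∈ D.bag s := by
  obtain ⟨n, hn⟩ := hst
  induction n generalizing t with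
  | zero => exact Or.inr (hn ▸ hv)
  | succ n ih =>
    rcases eq_or_ne t (D.top v) with rfl | ht
    · exact Or.inl ⟨n + 1, hn⟩
    · exact ih (D.mem_bag_parent hv ht) hn

lemma mem_bag_of_isAncestor (hv : v ∈ D.bag t) (hst : IsAncestor D.parent s t)
    (hs : IsAncestor D.parent (D.top v) s) : v ∈ D.bag s := by
  refine (mem_cone_or_mem_bag hv hst).elim (fun hcone => ?_) id
  exact D.isRootedTree.isAncestor_antisymm hcone hs ▸ D.mem_bag_top v

lemma mem_adhesion_of_notMem_cone (hv : v ∈ D.bag t) (hst : IsAncestor D.parent s t)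
    (hs : v ∉ D.cone s) : v ∈ D.adhesion s := by
  have hvs := (mem_cone_or_mem_bag hv hst).resolve_left hs
  refine ⟨hvs, D.mem_bag_parent hvs ?_⟩
  rintro rfl
  exact hs (IsAncestor.refl _ _)

lemma cone_root : D.cone D.root = Set.univ :=
  Set.eq_univ_of_forall fun v => D.isRootedTree.root_isAncestor (D.top v)

lemma cone_subset_cone_parent (s : D.Node) : D.cone s ⊆ D.cone (D.parent s) :=
  fun _ hv => hv.parent_left

lemma disjoint_cone_bag_parent (hs : s ≠ D.root) :
    Disjoint (D.cone s) (D.bag (D.parent s)) :=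
  Set.disjoint_left.2 fun _ hcone hv =>
    D.isRootedTree.not_isAncestor_parent hs (hcone.trans (top_isAncestor hv))

lemma disjoint_cone_bag_root (hs : s ≠ D.root) : Disjoint (D.cone s) (D.bag D.root) :=
  Set.disjoint_left.2 fun _ hcone hv =>
    hs (D.isRootedTree.eq_root_of_isAncestor (D.top_eq_root hv ▸ hcone))

lemma alphaSet_eq_cone (hs : s ≠ D.root) : alphaSet D.parent D.bag s = D.cone s := by
  ext v
  refine ⟨fun ⟨⟨t, hst, hv⟩, hnot⟩ => ?_, fun hv => ⟨⟨D.top v, hv, D.mem_bag_top v⟩, fun h => ?_⟩⟩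
  · by_contra hcone
    exact hnot (mem_adhesion_of_notMem_cone hv hst hcone)
  · exact (disjoint_cone_bag_parent hs).notMem_of_mem_left hv h.2

lemma nbhd_cone_subset_adhesion (s : D.Node) : nbhd G (D.cone s) ⊆ D.adhesion s := by
  rintro v ⟨hv, u, hu, huv⟩
  obtain ⟨t, hut, hvt⟩ := D.exists_bag_of_adj huv
  exact mem_adhesion_of_notMem_cone hvt (hu.trans (top_isAncestor hut)) hv

lemma nbhd_cone_sdiff_bag_subset_bag (s : D.Node) : nbhd G (D.cone s \ D.bag s) ⊆ D.bag s := by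
  rintro v ⟨hv, u, hu, huv⟩
  by_cases hcone : v ∈ D.cone s
  · by_contra hvs
    exact hv ⟨hcone, hvs⟩
  · exact (nbhd_cone_subset_adhesion s ⟨hcone, u, hu.1, huv⟩).1

lemma mem_bag_top_or_mem_bag_top (huv : G.Adj u v) :
    u ∈ D.bag (D.top v) ∨ v ∈ D.bag (D.top u) := by
  obtain ⟨t, hut, hvt⟩ := D.exists_bag_of_adj huv
  have hu := top_isAncestor hut
  have hv := top_isAncestor hvt
  exact (hu.total hv).imp (mem_bag_of_isAncestor hut hv) (mem_bag_of_isAncestor hvt hu)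

lemma depth_le (hv : v ∈ D.bag s) : D.depth v ≤ treeDepth D.root D.parent s :=
  D.isRootedTree.treeDepth_le (top_isAncestor hv)

lemma le_depth (hv : v ∈ D.cone s) : treeDepth D.root D.parent s ≤ D.depth v :=
  D.isRootedTree.treeDepth_le hv

lemma lt_depth (hv : v ∈ D.cone s \ D.bag s) : treeDepth D.root D.parent s < D.depth v := by
  refine D.isRootedTree.treeDepth_lt hv.1 ?_
  rintro rfl
  exact hv.2 (D.mem_bag_top v)

variable (D) in
lemma isRootedTreeDecomp : IsRootedTreeDecomp G D.root D.parent D.bag where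
  parent_root := D.isRootedTree.parent_root
  reaches_root := D.isRootedTree.root_isAncestor
  exists_bag v := ⟨D.top v, D.mem_bag_top v⟩
  adj_bag _ _ := D.exists_bag_of_adj
  bag_connected := by
    rintro v t₁ t₂ s h₁ h₂ ⟨hs, hcommon⟩
    have htop := hcommon _ (top_isAncestor h₁) (top_isAncestor h₂)
    exact hs.elim (mem_bag_of_isAncestor h₁ · htop) (mem_bag_of_isAncestor h₂ · htop)

/-- The decomposition with a single bag. -/
def single (G : SimpleGraph V) : RootedDecomp G where
  Node := Unit
  root := ()
  parent := id
  bag _ := Set.univ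
  top _ := ()
  isRootedTree := ⟨rfl, fun _ => IsAncestor.refl _ _⟩
  mem_bag_top := Set.mem_univ
  top_eq_root _ := rfl
  mem_bag_parent _ _ := Set.mem_univ _
  exists_bag_of_adj _ := ⟨(), Set.mem_univ _, Set.mem_univ _⟩

/-- The multiset of bag sizes, which decreases in the Dershowitz–Manna order when a bag is
split. -/
noncomputable def bagSizes (D : RootedDecomp G) : Multiset ℕ := ∑ s, {(D.bag s).ncard}

end Basic

section Reroot

variable {V : Type} {G : SimpleGraph V} {D : RootedDecomp G} {c t : D.Node}

open Classical in
/-- The parent map after rerooting at the child `c` of the root: the edge between `c` and the root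
is reversed. -/
noncomputable def rerootParent (c : D.Node) : D.Node → D.Node :=
  Function.update (Function.update D.parent D.root c) c c

lemma rerootParent_self : rerootParent c c = c := by
  simp [rerootParent]

lemma rerootParent_root : rerootParent c D.root = c := by
  simp [rerootParent, Function.update_apply]

lemma rerootParent_of_ne (hc : t ≠ c) (hroot : t ≠ D.root) :
    rerootParent c t = D.parent t := by
  simp [rerootParent, hc, hroot]

lemma iterate_rerootParent {n : ℕ} (hc : c ≠ D.root) (hn : D.parent^[n] t = c) :
    (rerootParent c)^[n] t = c := by
  induction n generalizing t with
  | zero => exact hn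
  | succ n ih =>
    rcases eq_or_ne t c with rfl | htc
    · exact Function.iterate_fixed rerootParent_self _
    · have hroot : t ≠ D.root := by
        rintro rfl
        exact hc (hn ▸ Function.iterate_fixed D.isRootedTree.parent_root _)
      rw [Function.iterate_succ_apply, rerootParent_of_ne htc hroot]
      exact ih hn

lemma isRootedTree_rerootParent : IsRootedTree c (rerootParent c) where
  parent_root := rerootParent_self
  root_isAncestor t := by
    obtain ⟨n, hn⟩ := D.isRootedTree.root_isAncestor t
    induction n generalizing t with
    | zero =>
      obtain rfl : t = D.root := hn
      exact ⟨1, rerootParent_root⟩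
    | succ n ih =>
      by_cases hc : t = c
      · exact ⟨0, hc⟩
      by_cases hroot : t = D.root
      · exact ⟨1, hroot ▸ rerootParent_root⟩
      · exact (ih (D.parent t) hn).trans ⟨1, rerootParent_of_ne hc hroot⟩

open Classical in
/-- The decomposition rerooted at a child `c` of its root. -/
noncomputable def rerootChild (hc : D.parent c = D.root) : RootedDecomp G where
  Node := D.Node
  root := c
  parent := rerootParent c
  bag := D.bag
  top v := if v ∈ D.bag c then c else D.top v
  isRootedTree := isRootedTree_rerootParent
  mem_bag_top v := by
    split_ifs with hv
    exacts [hv, D.mem_bag_top v]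
  top_eq_root hv := if_pos hv
  mem_bag_parent {v s} hv hs := by
    rcases eq_or_ne s c with rfl | hsc
    · rwa [rerootParent_self]
    have hs' : s ≠ D.root → s ≠ D.top v := by
      rintro hroot rfl
      by_cases hvc : v ∈ D.bag c
      · have htop := (top_isAncestor hvc).parent_right hsc
        exact hroot (D.isRootedTree.eq_root_of_isAncestor (hc ▸ htop))
      · exact hs (if_neg hvc).symm
    by_cases hroot : s = D.root
    · subst hroot
      rw [rerootParent_root]
      by_contra hvc
      exact hs ((if_neg hvc).trans (D.top_eq_root hv)).symm
    · rw [rerootParent_of_ne hsc hroot]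
      exact D.mem_bag_parent hv (hs' hroot)
  exists_bag_of_adj := D.exists_bag_of_adj

lemma AdhesionLE.rerootChild {k : ℕ} (hD : D.AdhesionLE k) (hc : D.parent c = D.root)
    (hroot : c ≠ D.root) : (rerootChild hc).AdhesionLE k := by
  change ∀ s : D.Node, s ≠ c → (D.bag s ∩ D.bag (rerootParent c s)).ncard ≤ k
  intro s hs
  by_cases hsr : s = D.root
  · subst hsr
    rw [rerootParent_root, ← hc, Set.inter_comm]
    exact hD c hroot
  · rw [rerootParent_of_ne hs hsr]
    exact hD s hsr

lemma AdhesionLE.exists_root {k : ℕ} (hD : D.AdhesionLE k) (t : D.Node) :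
    ∃ D' : RootedDecomp G, D'.AdhesionLE k ∧ D'.bagSizes = D.bagSizes ∧
      D'.bag D'.root = D.bag t := by
  obtain ⟨n, hn⟩ := D.isRootedTree.root_isAncestor t
  induction n generalizing D with
  | zero => exact ⟨D, hD, rfl, congrArg D.bag hn.symm⟩
  | succ n ih =>
    by_cases hroot : D.parent^[n] t = D.root
    · exact ih hD t hroot
    · have hc : D.parent (D.parent^[n] t) = D.root := 
        (Function.iterate_succ_apply' D.parent n t).symm.trans hn
      exact ih (hD.rerootChild hc hroot) t (iterate_rerootParent hroot rfl)

end Reroot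

section Split

variable {V : Type} {G : SimpleGraph V} (D : RootedDecomp G) (A B : Set V)

/-- The bag of the `b`-copy of `s` after splitting along `(A, B)`. Besides the part of the old bag
on the side `b`, it receives the separator vertices below `s`, which connects their new subtrees to
the root bag. -/
def splitBag (p : D.Node × Bool) : Set V :=
  D.bag p.1 ∩ side A B p.2 ∪ A ∩ B ∩ D.cone p.1

open Classical in
/-- Both copies of the old tree keep their shape, and the copy `(root, false)` is hung below the
new root `(root, true)`. -/
noncomputable def splitParent (p : D.Node × Bool) : D.Node × Bool :=
  if p.1 = D.root then (D.root, true) else (D.parent p.1, p.2)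

open Classical in
/-- The topmost node containing `v` after splitting along `(A, B)`. -/
noncomputable def splitTop (v : V) : D.Node × Bool :=
  if v ∈ A ∩ B then (D.root, true) else (D.top v, decide (v ∈ A))

variable {D A B} {v : V} {s : D.Node} {b : Bool} {k : ℕ}

lemma splitParent_root : D.splitParent (D.root, b) = (D.root, true) := if_pos rfl

lemma splitParent_of_ne (hs : s ≠ D.root) : D.splitParent (s, b) = (D.parent s, b) := if_neg hs

lemma isRootedTree_splitParent : IsRootedTree (D.root, true) D.splitParent where
  parent_root := splitParent_root
  root_isAncestor := by
    rintro ⟨t, b⟩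
    obtain ⟨n, hn⟩ := D.isRootedTree.root_isAncestor t
    induction n generalizing t with
    | zero =>
      obtain rfl : t = D.root := hn
      exact ⟨1, splitParent_root⟩
    | succ n ih =>
      by_cases ht : t = D.root
      · exact ⟨1, ht ▸ splitParent_root⟩
      · exact (ih (D.parent t) hn).trans ⟨1, splitParent_of_ne ht⟩

lemma mem_splitBag_of_mem_inter (hv : v ∈ A ∩ B) :
    v ∈ D.splitBag A B (s, b) ↔ v ∈ D.bag s ∨ v ∈ D.cone s := by
  exact or_congr (and_iff_left (inter_subset_side A B b hv)) (and_iff_right hv)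

lemma mem_splitBag_of_notMem_inter (hv : v ∉ A ∩ B) :
    v ∈ D.splitBag A B (s, b) ↔ v ∈ D.bag s ∧ v ∈ side A B b := by
  refine or_iff_left fun h => hv h.1

lemma mem_splitBag_splitTop (h : IsSeparation G A B) (v : V) :
    v ∈ D.splitBag A B (D.splitTop A B v) := by
  unfold splitTop
  split_ifs with hv
  · exact (mem_splitBag_of_mem_inter hv).2 (Or.inr (cone_root.ge (Set.mem_univ v)))
  · exact (mem_splitBag_of_notMem_inter hv).2 ⟨D.mem_bag_top v, (h.mem_side_iff hv _).2 rfl⟩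

lemma splitTop_eq_of_mem_splitBag_root (hv : v ∈ D.splitBag A B (D.root, true)) :
    D.splitTop A B v = (D.root, true) := by
  classical
  unfold splitTop
  split_ifs with hAB
  · rfl
  · obtain ⟨hroot, hA⟩ := (mem_splitBag_of_notMem_inter hAB).1 hv
    exact Prod.ext (D.top_eq_root hroot) (decide_eq_true hA)

lemma mem_bag_or_mem_cone_parent (hv : v ∈ D.bag s ∨ v ∈ D.cone s) :
    v ∈ D.bag (D.parent s) ∨ v ∈ D.cone (D.parent s) := by
  by_cases hcone : v ∈ D.cone s
  · exact Or.inr (cone_subset_cone_parent s hcone)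
  · refine Or.inl (D.mem_bag_parent (hv.resolve_right hcone) ?_)
    rintro rfl
    exact hcone (IsAncestor.refl _ _)

lemma mem_splitBag_splitParent (h : IsSeparation G A B) (hv : v ∈ D.splitBag A B (s, b))
    (hs : (s, b) ≠ D.splitTop A B v) : v ∈ D.splitBag A B (D.splitParent (s, b)) := by
  by_cases hAB : v ∈ A ∩ B
  · rcases eq_or_ne s D.root with rfl | hroot
    · rw [splitParent_root, mem_splitBag_of_mem_inter hAB, cone_root]
      exact Or.inr (Set.mem_univ v)
    · rw [splitParent_of_ne hroot, mem_splitBag_of_mem_inter hAB]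
      exact mem_bag_or_mem_cone_parent ((mem_splitBag_of_mem_inter hAB).1 hv)
  · obtain ⟨hvs, hvb⟩ := (mem_splitBag_of_notMem_inter hAB).1 hv
    have htop : s ≠ D.top v := by
      rintro rfl
      exact hs ((if_neg hAB).trans (by rw [(h.mem_side_iff hAB b).1 hvb])).symm
    have hroot : s ≠ D.root := by
      rintro rfl
      exact htop (D.top_eq_root hvs).symm
    rw [splitParent_of_ne hroot, mem_splitBag_of_notMem_inter hAB]
    exact ⟨D.mem_bag_parent hvs htop, hvb⟩

variable (D) in
/-- Splitting the decomposition along a separation `(A, B)`: two copies of it, one for each side,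
are glued along the separator. -/
noncomputable def split (h : IsSeparation G A B) : RootedDecomp G where
  Node := D.Node × Bool
  root := (D.root, true)
  parent := D.splitParent
  bag := D.splitBag A B
  top := D.splitTop A B
  isRootedTree := isRootedTree_splitParent
  mem_bag_top := mem_splitBag_splitTop h
  top_eq_root := splitTop_eq_of_mem_splitBag_root
  mem_bag_parent := mem_splitBag_splitParent h
  exists_bag_of_adj {u v} huv := by
    obtain ⟨t, hu, hv⟩ := D.exists_bag_of_adj huv
    obtain ⟨b, hub, hvb⟩ := h.exists_mem_side_of_adj huv
    exact ⟨(t, b), Or.inl ⟨hu, hub⟩, Or.inl ⟨hv, hvb⟩⟩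

lemma splitBag_subset_inter (h : D.bag s ⊆ side A B b) :
    D.splitBag A B (s, !b) ⊆ A ∩ B := by
  rintro v (hv | hv)
  · exact side_inter_side_not A B b ▸ ⟨h hv.1, hv.2⟩
  · exact hv.1

lemma splitBag_eq_union_sdiff :
    D.splitBag A B (s, b) = D.bag s ∩ side A B b ∪ A ∩ B ∩ (D.cone s \ D.bag s) := by
  ext v
  have := @inter_subset_side V A B b v
  simp only [splitBag, Set.mem_union, Set.mem_inter_iff, Set.mem_sdiff] at *
  tauto

lemma splitBag_root_inter_splitBag_root_subset :
    D.splitBag A B (D.root, false) ∩ D.splitBag A B (D.root, true) ⊆ A ∩ B := by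
  rintro v ⟨hf | hf, ht⟩
  · exact ht.elim (fun ht => ⟨ht.2, hf.2⟩) And.left
  · exact hf.1

lemma splitBag_inter_splitBag_parent_subset :
    D.splitBag A B (s, b) ∩ D.splitBag A B (D.parent s, b) ⊆
      D.adhesion s ∩ side A B b ∪ A ∩ B ∩ D.cone s := by
  rintro v ⟨hs | hs, hp⟩
  · by_cases hcone : v ∈ D.cone s
    · rcases hp with hp | hp
      · exact Or.inl ⟨⟨hs.1, hp.1⟩, hs.2⟩
      · exact Or.inr ⟨hp.1, hcone⟩
    · exact Or.inl ⟨mem_adhesion_of_notMem_cone hs.1 (IsAncestor.refl _ _) hcone, hs.2⟩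
  · exact Or.inr hs

variable [Finite V]

lemma ncard_inter_cone_le (h : IsLeastBreaking G k (D.bag D.root) D.depth A B)
    (hs : s ≠ D.root) (b : Bool) :
    (A ∩ B ∩ D.cone s).ncard ≤ (D.adhesion s \ side A B b).ncard := by
  rcases (A ∩ B ∩ D.cone s).eq_empty_or_nonempty with hempty | hne
  · simp only [hempty, Set.ncard_empty, Nat.zero_le]
  rw [← side_inter_side_not A B b] at hne ⊢
  refine ((h.side b).ncard_inter_lt_ncard_nbhd_sdiff (disjoint_cone_bag_root hs)
    (fun v hv => depth_le (nbhd_cone_subset_adhesion s hv).2)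
    (fun v hv => (D.isRootedTree.treeDepth_parent_lt hs).trans_le (le_depth hv)) hne).le.trans
    (Set.ncard_le_ncard (Set.sdiff_subset_sdiff_left (nbhd_cone_subset_adhesion s)))

lemma ncard_inter_cone_sdiff_bag_lt (h : IsLeastBreaking G k (D.bag D.root) D.depth A B)
    (b : Bool) (hne : (A ∩ B ∩ (D.cone s \ D.bag s)).Nonempty) :
    (A ∩ B ∩ (D.cone s \ D.bag s)).ncard < (D.bag s \ side A B b).ncard := by
  have hdisj : Disjoint (D.cone s \ D.bag s) (D.bag D.root) := by
    rcases eq_or_ne s D.root with rfl | hs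
    · exact Set.disjoint_sdiff_left
    · exact (disjoint_cone_bag_root hs).mono_left Set.sdiff_subset
  rw [← side_inter_side_not A B b] at hne ⊢
  exact ((h.side b).ncard_inter_lt_ncard_nbhd_sdiff hdisj
    (fun v hv => depth_le (nbhd_cone_sdiff_bag_subset_bag s hv))
    (fun v hv => lt_depth hv) hne).trans_le
    (Set.ncard_le_ncard (Set.sdiff_subset_sdiff_left (nbhd_cone_sdiff_bag_subset_bag s)))

lemma AdhesionLE.split (hD : D.AdhesionLE k)
    (h : IsLeastBreaking G k (D.bag D.root) D.depth A B) :
    (D.split h.isSeparation).AdhesionLE k := by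
  rintro ⟨s, b⟩ hsb
  change (D.splitBag A B (s, b) ∩ D.splitBag A B (D.splitParent (s, b))).ncard ≤ k
  rcases eq_or_ne s D.root with rfl | hs
  · obtain rfl : b = false := Bool.eq_false_of_not_eq_true fun hb => hsb (congrArg _ hb)
    rw [splitParent_root]
    exact (Set.ncard_le_ncard splitBag_root_inter_splitBag_root_subset).trans h.order_le
  · rw [splitParent_of_ne hs]
    calc (D.splitBag A B (s, b) ∩ D.splitBag A B (D.parent s, b)).ncard
        ≤ (D.adhesion s ∩ side A B b ∪ A ∩ B ∩ D.cone s).ncard :=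
          Set.ncard_le_ncard splitBag_inter_splitBag_parent_subset
      _ ≤ (D.adhesion s ∩ side A B b).ncard + (A ∩ B ∩ D.cone s).ncard := Set.ncard_union_le _ _
      _ ≤ (D.adhesion s ∩ side A B b).ncard + (D.adhesion s \ side A B b).ncard :=
          Nat.add_le_add_left (ncard_inter_cone_le h hs b) _
      _ = (D.adhesion s).ncard := Set.ncard_inter_add_ncard_sdiff_eq_ncard _ _
      _ ≤ k := hD s hs

lemma ncard_splitBag_lt (h : IsLeastBreaking G k (D.bag D.root) D.depth A B)
    (hs : ¬ D.bag s ⊆ side A B b) : (D.splitBag A B (s, b)).ncard < (D.bag s).ncard := by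
  have hlt : (A ∩ B ∩ (D.cone s \ D.bag s)).ncard < (D.bag s \ side A B b).ncard := by
    rcases (A ∩ B ∩ (D.cone s \ D.bag s)).eq_empty_or_nonempty with hempty | hne
    · rw [hempty, Set.ncard_empty, Set.ncard_pos]
      exact Set.sdiff_nonempty.2 hs
    · exact ncard_inter_cone_sdiff_bag_lt h b hne
  calc (D.splitBag A B (s, b)).ncard
      ≤ (D.bag s ∩ side A B b).ncard + (A ∩ B ∩ (D.cone s \ D.bag s)).ncard :=
        splitBag_eq_union_sdiff ▸ Set.ncard_union_le _ _
    _ < (D.bag s ∩ side A B b).ncard + (D.bag s \ side A B b).ncard := Nat.add_lt_add_left hlt _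
    _ = (D.bag s).ncard := Set.ncard_inter_add_ncard_sdiff_eq_ncard _ _

lemma splitBag_eq_bag (h : IsLeastBreaking G k (D.bag D.root) D.depth A B)
    (hs : D.bag s ⊆ side A B b) : D.splitBag A B (s, b) = D.bag s := by
  have hempty : A ∩ B ∩ (D.cone s \ D.bag s) = ∅ := by
    by_contra hne
    have hlt := ncard_inter_cone_sdiff_bag_lt h b (Set.nonempty_iff_ne_empty.2 hne)
    rw [Set.sdiff_eq_empty.2 hs, Set.ncard_empty] at hlt
    exact Nat.not_lt_zero _ hlt
  rw [splitBag_eq_union_sdiff, hempty, Set.union_empty, Set.inter_eq_left.2 hs]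

lemma ncard_splitBag_alternative (h : IsLeastBreaking G k (D.bag D.root) D.depth A B)
    (s : D.Node) :
    (∀ b, (D.splitBag A B (s, b)).ncard < (D.bag s).ncard) ∨
      ∃ b, (D.splitBag A B (s, b)).ncard = (D.bag s).ncard ∧
        (D.splitBag A B (s, !b)).ncard < (D.bag D.root).ncard := by
  by_cases hs : ∃ b, D.bag s ⊆ side A B b
  · obtain ⟨b, hb⟩ := hs
    exact Or.inr ⟨b, by rw [splitBag_eq_bag h hb],
      (Set.ncard_le_ncard (splitBag_subset_inter hb)).trans_lt h.ncard_inter_lt⟩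
  · exact Or.inl fun b => ncard_splitBag_lt h (not_exists.1 hs b)

lemma bagSizes_split_lt (h : IsLeastBreaking G k (D.bag D.root) D.depth A B) :
    (D.split h.isSeparation).bagSizes.IsDershowitzMannaLT D.bagSizes :=
  isDershowitzMannaLT_sum_singleton (ncard_splitBag_alternative h)
    fun b => ncard_splitBag_lt h (h.side b).not_subset_left

end Split

section Compactify

variable {V : Type} {G : SimpleGraph V} {D : RootedDecomp G} {s : D.Node} {P Q : Set V}
  {u v : V} {k : ℕ}

/-- The vertex sets into which compactification divides `D.cone s`: the components of
`G[D.cone s]`, except that the root is not divided. -/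
inductive IsPiece (D : RootedDecomp G) : D.Node → Set V → Prop
  | root : IsPiece D D.root Set.univ
  | component {s : D.Node} {P : Set V} (hs : s ≠ D.root) (hP : IsComponent G (D.cone s) P) :
      IsPiece D s P

namespace IsPiece

lemma subset_cone (h : D.IsPiece s P) : P ⊆ D.cone s := by
  cases h with
  | root => exact cone_root.ge
  | component _ hP => exact hP.subset

lemma eq_univ (h : D.IsPiece D.root P) : P = Set.univ := by
  cases h with
  | root => rfl
  | component hs _ => exact absurd rfl hs

lemma isComponent (h : D.IsPiece s P) (hs : s ≠ D.root) : IsComponent G (D.cone s) P := by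
  cases h with
  | root => exact absurd rfl hs
  | component _ hP => exact hP

lemma nbhd_subset_adhesion (h : D.IsPiece s P) : nbhd G P ⊆ D.adhesion s := by
  cases h with
  | root => exact fun v hv => absurd (Set.mem_univ v) hv.1
  | component _ hP =>
    intro v hv
    have hcone := hP.notMem_of_mem_nbhd hv
    exact nbhd_cone_subset_adhesion s
      ((nbhd_subset_of_subset hP.subset hv).resolve_left hcone)

lemma eq_of_mem (hP : D.IsPiece s P) (hQ : D.IsPiece s Q) (hvP : v ∈ P) (hvQ : v ∈ Q) : P = Q := by
  rcases eq_or_ne s D.root with rfl | hs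
  · rw [hP.eq_univ, hQ.eq_univ]
  · exact (hP.isComponent hs).eq_of_mem (hQ.isComponent hs) hvP hvQ

lemma exists_parent [Finite V] (h : D.IsPiece s P) :
    ∃ Q, D.IsPiece (D.parent s) Q ∧ P ⊆ Q := by
  by_cases hp : D.parent s = D.root
  · exact ⟨Set.univ, hp ▸ root, Set.subset_univ P⟩
  · have hs : s ≠ D.root := by
      rintro rfl
      exact hp D.isRootedTree.parent_root
    obtain ⟨Q, hPQ, hQ⟩ := exists_isComponent_superset
      (h.subset_cone.trans (cone_subset_cone_parent s)) (h.isComponent hs).connected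
    exact ⟨Q, component hp hQ, hPQ⟩

lemma exists_of_mem_cone [Finite V] (hv : v ∈ D.cone s) : ∃ P, D.IsPiece s P ∧ v ∈ P := by
  by_cases hs : s = D.root
  · exact ⟨Set.univ, hs ▸ root, Set.mem_univ v⟩
  · obtain ⟨P, hvP, hP⟩ := exists_isComponent_mem hv
    exact ⟨P, component hs hP, hvP⟩

end IsPiece

/-- The nodes of the compactification: a node of `D` together with one of its pieces. -/
@[ext]
structure Piece (D : RootedDecomp G) where
  node : D.Node
  verts : Set V
  isPiece : D.IsPiece node verts

namespace Piece

variable {X Y : D.Piece}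

lemma eq_of_mem (hnode : X.node = Y.node) (hvX : v ∈ X.verts) (hvY : v ∈ Y.verts) : X = Y :=
  Piece.ext hnode (X.isPiece.eq_of_mem (hnode ▸ Y.isPiece) hvX hvY)

/-- The root of the compactification. -/
def root (D : RootedDecomp G) : D.Piece := ⟨D.root, Set.univ, IsPiece.root⟩

lemma eq_root (h : X.node = D.root) : X = root D :=
  Piece.ext h (h ▸ X.isPiece).eq_univ

/-- The bag of a piece: the old bag cut down to the piece and its neighborhood, which will be the
adhesion. -/
def bag (X : D.Piece) : Set V := D.bag X.node ∩ X.verts ∪ nbhd G X.verts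

lemma bag_subset (X : D.Piece) : X.bag ⊆ D.bag X.node :=
  Set.union_subset Set.inter_subset_left
    (X.isPiece.nbhd_subset_adhesion.trans Set.inter_subset_left)

variable [Finite V]

instance : Finite D.Piece :=
  Finite.of_injective (fun X => (X.node, X.verts)) fun _ _ h =>
    Piece.ext (congrArg Prod.fst h) (congrArg Prod.snd h)

/-- The piece of the parent node that contains the given piece. -/
noncomputable def parent (X : D.Piece) : D.Piece :=
  ⟨D.parent X.node, X.isPiece.exists_parent.choose, X.isPiece.exists_parent.choose_spec.1⟩

lemma verts_subset_parent (X : D.Piece) : X.verts ⊆ X.parent.verts :=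
  X.isPiece.exists_parent.choose_spec.2

lemma node_iterate_parent (n : ℕ) (X : D.Piece) : (parent^[n] X).node = D.parent^[n] X.node :=
  Function.Semiconj.iterate_right (f := node) (fun _ => rfl) n X

lemma verts_subset_of_isAncestor (h : IsAncestor parent X Y) : Y.verts ⊆ X.verts := by
  obtain ⟨n, rfl⟩ := h
  induction n generalizing Y with
  | zero => exact subset_rfl
  | succ n ih => exact Y.verts_subset_parent.trans ih

lemma isRootedTree_parent (D : RootedDecomp G) : IsRootedTree (root D) parent where
  parent_root := eq_root D.isRootedTree.parent_root
  root_isAncestor X := by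
    obtain ⟨n, hn⟩ := D.isRootedTree.root_isAncestor X.node
    exact ⟨n, eq_root ((node_iterate_parent n X).trans hn)⟩

/-- The piece at the topmost node containing `v`. -/
noncomputable def top (D : RootedDecomp G) (v : V) : D.Piece :=
  have h := IsPiece.exists_of_mem_cone (D := D) (v := v) (IsAncestor.refl D.parent (D.top v))
  ⟨D.top v, h.choose, h.choose_spec.1⟩

lemma mem_verts_top (D : RootedDecomp G) (v : V) : v ∈ (top D v).verts :=
  (IsPiece.exists_of_mem_cone (D := D) (v := v) (IsAncestor.refl _ _)).choose_spec.2

lemma isAncestor_top_iff : IsAncestor parent X (top D v) ↔ v ∈ X.verts := by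
  refine ⟨fun h => verts_subset_of_isAncestor h (mem_verts_top D v), fun hv => ?_⟩
  obtain ⟨n, hn⟩ := X.isPiece.subset_cone hv
  exact ⟨n, eq_of_mem ((node_iterate_parent n _).trans hn)
    (verts_subset_of_isAncestor ⟨n, rfl⟩ (mem_verts_top D v)) hv⟩

lemma mem_bag_top (D : RootedDecomp G) (v : V) : v ∈ (top D v).bag :=
  Or.inl ⟨D.mem_bag_top v, mem_verts_top D v⟩

lemma nbhd_verts_subset_bag_parent (X : D.Piece) : nbhd G X.verts ⊆ X.parent.bag := by
  intro v hv
  have hbag := (X.isPiece.nbhd_subset_adhesion hv).2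
  exact (nbhd_subset_of_subset X.verts_subset_parent hv).imp (And.intro hbag) id

lemma mem_bag_parent (hv : v ∈ X.bag) (hX : X ≠ top D v) : v ∈ X.parent.bag := by
  rcases hv with ⟨hbag, hverts⟩ | hv
  · refine Or.inl ⟨D.mem_bag_parent hbag fun hnode => hX ?_, X.verts_subset_parent hverts⟩
    exact eq_of_mem hnode hverts (mem_verts_top D v)
  · exact X.nbhd_verts_subset_bag_parent hv

lemma bag_inter_bag_parent (hX : X ≠ root D) : X.bag ∩ X.parent.bag = nbhd G X.verts := by
  have hdisj := disjoint_cone_bag_parent fun h => hX (eq_root h)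
  refine Set.Subset.antisymm ?_ fun v hv => ⟨Or.inr hv, X.nbhd_verts_subset_bag_parent hv⟩
  rintro v ⟨hv | hv, hp⟩
  · exact absurd (X.parent.bag_subset hp) (hdisj.notMem_of_mem_left (X.isPiece.subset_cone hv.2))
  · exact hv

lemma mem_bag_top_of_adj (huv : G.Adj u v) (hu : u ∈ D.bag (D.top v)) : u ∈ (top D v).bag := by
  by_cases hverts : u ∈ (top D v).verts
  · exact Or.inl ⟨hu, hverts⟩
  · exact Or.inr ⟨hverts, v, mem_verts_top D v, huv.symm⟩

end Piece

variable [Finite V]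

/-- Every non-root node `s` is replaced by one node for each component of `G[α(s)]`. -/
noncomputable def compactify (D : RootedDecomp G) : RootedDecomp G where
  Node := D.Piece
  fintypeNode := Fintype.ofFinite D.Piece
  root := Piece.root D
  parent := Piece.parent
  bag := Piece.bag
  top := Piece.top D
  isRootedTree := Piece.isRootedTree_parent D
  mem_bag_top := Piece.mem_bag_top D
  top_eq_root hv := Piece.eq_root (D.top_eq_root (Piece.bag_subset _ hv))
  mem_bag_parent := Piece.mem_bag_parent
  exists_bag_of_adj {u v} huv := by
    rcases mem_bag_top_or_mem_bag_top (D := D) huv with hu | hv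
    · exact ⟨Piece.top D v, Piece.mem_bag_top_of_adj huv hu, Piece.mem_bag_top D v⟩
    · exact ⟨Piece.top D u, Piece.mem_bag_top D u, Piece.mem_bag_top_of_adj huv.symm hv⟩

lemma AdhesionLE.compactify (hD : D.AdhesionLE k) : D.compactify.AdhesionLE k := by
  change ∀ X : D.Piece, X ≠ Piece.root D → (X.bag ∩ X.parent.bag).ncard ≤ k
  intro X hX
  rw [Piece.bag_inter_bag_parent hX]
  exact (Set.ncard_le_ncard X.isPiece.nbhd_subset_adhesion).trans
    (hD X.node fun h => hX (Piece.eq_root h))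

lemma alphaSet_compactify {X : D.Piece} (hX : X ≠ Piece.root D) :
    alphaSet Piece.parent Piece.bag X = X.verts :=
  (alphaSet_eq_cone (D := D.compactify) hX).trans (Set.ext fun _ => Piece.isAncestor_top_iff)

lemma isCompactRTD_compactify (D : RootedDecomp G) :
    IsCompactRTD G D.compactify.root D.compactify.parent D.compactify.bag := by
  change IsCompactRTD G (Piece.root D) Piece.parent Piece.bag
  intro X hX
  rw [alphaSet_compactify hX]
  exact ⟨(X.isPiece.isComponent fun h => hX (Piece.eq_root h)).connected,
    (Piece.bag_inter_bag_parent hX).symm⟩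

end Compactify

section Unbreakable

variable {V : Type} [Finite V] {G : SimpleGraph V} {k : ℕ}

lemma AdhesionLE.exists_bagSizes_lt {D : RootedDecomp G} {t : D.Node} {A B : Set V}
    (hD : D.AdhesionLE k) (h : IsBreaking G k (D.bag t) A B) :
    ∃ D' : RootedDecomp G, D'.AdhesionLE k ∧ D'.bagSizes.IsDershowitzMannaLT D.bagSizes := by
  obtain ⟨D', hD', hsizes, hbag⟩ := hD.exists_root t
  obtain ⟨A', B', h'⟩ := (hbag ▸ h).exists_isLeastBreaking D'.depth
  exact ⟨D'.split h'.isSeparation, hD'.split h', hsizes ▸ bagSizes_split_lt h'⟩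

lemma AdhesionLE.exists_isUnbreakable {D : RootedDecomp G} (hD : D.AdhesionLE k) :
    ∃ D' : RootedDecomp G, D'.AdhesionLE k ∧
      ∀ t, ∀ i ≤ k, IsUnbreakable G (D'.bag t) i i := by
  induction D using (InvImage.wf (bagSizes (G := G))
    Multiset.wellFounded_isDershowitzMannaLT).induction with
  | _ D ih =>
    by_cases h : ∃ t A B, IsBreaking G k (D.bag t) A B
    · obtain ⟨t, A, B, hbr⟩ := h
      obtain ⟨D', hD', hlt⟩ := hD.exists_bagSizes_lt hbr
      exact ih D' hlt hD'
    · push Not at h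
      exact ⟨D, hD, fun t i hi => isUnbreakable_of_forall_not_isBreaking hi (h t)⟩

end Unbreakable

end RootedDecomp

/-- every finite graph `G` and positive integer `k` admit a rooted
compact tree decomposition with all adhesions of size at most `k` whose every
bag is `(i,i)`-unbreakable in `G` for every `1 ≤ i ≤ k`. -/
theorem exists_rooted_compact_unbreakable_decomposition
    (V : Type) [Fintype V] (G : SimpleGraph V) (k : ℕ) (hk : 0 < k) :
    ∃ (ι : Type) (_ : Fintype ι) (root : ι) (parent : ι → ι) (β : ι → Set V),
      IsRootedTreeDecomp G root parent β ∧
      IsCompactRTD G root parent β ∧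
      (∀ t : ι, t ≠ root → (β t ∩ β (parent t)).ncard ≤ k) ∧
      (∀ t : ι, ∀ i : ℕ, 1 ≤ i → i ≤ k → IsUnbreakable G (β t) i i) := by
  have hsingle : (RootedDecomp.single G).AdhesionLE k := fun s hs => absurd rfl hs
  obtain ⟨D, hD, hunbreakable⟩ := hsingle.exists_isUnbreakable
  exact ⟨D.compactify.Node, D.compactify.fintypeNode, D.compactify.root, D.compactify.parent,
    D.compactify.bag, D.compactify.isRootedTreeDecomp, D.isCompactRTD_compactify, hD.compactify,
    fun X i _ hi => (hunbreakable _ i hi).mono (RootedDecomp.Piece.bag_subset X)⟩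
end

section
/- There exists a constant c > 0 such that for every finite set U with |U| = n ≥ 2 and all integers a, b with 0 ≤ a, b ≤ n, there exists a family F of subsets of U with |F| ≤ (a+b+2)^{c·min(a,b)} · ⌈log₂ n⌉ such that the following holds: for any sets A, B ⊆ U with A ∩ B = ∅, |A| ≤ a, and |B| ≤ b, there exists a set S ∈ F with A ⊆ S and B ∩ S = ∅. -/
/-!
Color the points of `U` uniformly at random with `a + b + 1` colors and let `S` be the set of
points of color `0`. With `q = 1 / (a + b + 1)`, the set `S` splits a given pair `(A, B)` with
probability at least `q ^ a * (1 - q) ^ b ≥ q ^ (a + 1)`, the last step being Bernoulli's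
inequality. There are at most `n ^ (2 * (a + b))` pairs, so by the union bound
`2 * (a + b + 1) ^ (a + 2) * ⌈log₂ n⌉` independent colorings suffice to split all of them. Passing
to complements exchanges `a` and `b`, so the exponent can be taken linear in the smaller of the two.
-/

open Finset

section UnionBound

variable {X ι : Type*} [Fintype X]

theorem card_piFinset_not_le_exp (P : X → Prop) [DecidablePred P] {p : ℝ} (t : ℕ)
    (hP : p * Fintype.card X ≤ #{x | P x}) :
    (#(Fintype.piFinset fun _ : Fin t ↦ ({x | ¬ P x} : Finset X)) : ℝ) ≤
      Real.exp (-(p * t)) * (Fintype.card X : ℝ) ^ t := by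
  have card_add : (#{x | P x} : ℝ) + #{x | ¬ P x} = Fintype.card X :=
    mod_cast card_filter_add_card_filter_not (s := univ) P
  have card_not_le : (#{x | ¬ P x} : ℝ) ≤ Real.exp (-p) * Fintype.card X := by
    have : (1 - p) * Fintype.card X ≤ Real.exp (-p) * Fintype.card X := by
      gcongr
      exact Real.one_sub_le_exp_neg p
    linarith
  calc (#(Fintype.piFinset fun _ : Fin t ↦ ({x | ¬ P x} : Finset X)) : ℝ)
      = (#{x | ¬ P x} : ℝ) ^ t := by rw [Fintype.card_piFinset_const, Nat.cast_pow]
    _ ≤ (Real.exp (-p) * Fintype.card X) ^ t := by gcongr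
    _ = Real.exp (-(p * t)) * (Fintype.card X : ℝ) ^ t := by
      rw [mul_pow, ← Real.exp_nat_mul]
      ring_nf

theorem exists_card_le_forall_exists_of_card_lt_exp [Nonempty X] (R : X → ι → Prop)
    [DecidableRel R] (Q : Finset ι) {p : ℝ} {t : ℕ}
    (hR : ∀ i ∈ Q, p * Fintype.card X ≤ #{x | R x i}) (hQ : (#Q : ℝ) < Real.exp (p * t)) :
    ∃ F : Finset X, #F ≤ t ∧ ∀ i ∈ Q, ∃ x ∈ F, R x i := by
  classical
  let missing (i : ι) : Finset (Fin t → X) := Fintype.piFinset fun _ ↦ {x | ¬ R x i}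
  have card_missing_lt : #(Q.biUnion missing) < #(univ : Finset (Fin t → X)) := by
    rify
    calc (#(Q.biUnion missing) : ℝ)
        ≤ ∑ i ∈ Q, (#(missing i) : ℝ) := mod_cast card_biUnion_le
      _ ≤ ∑ _i ∈ Q, Real.exp (-(p * t)) * (Fintype.card X : ℝ) ^ t :=
        sum_le_sum fun i hi ↦ card_piFinset_not_le_exp (R · i) t (hR i hi)
      _ = #Q * (Real.exp (-(p * t)) * (Fintype.card X : ℝ) ^ t) := by
        rw [sum_const, nsmul_eq_mul]
      _ < Real.exp (p * t) * (Real.exp (-(p * t)) * (Fintype.card X : ℝ) ^ t) := by gcongr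
      _ = #(univ : Finset (Fin t → X)) := by
        rw [← mul_assoc, ← Real.exp_add]
        simp
  obtain ⟨x, -, hx⟩ := exists_mem_notMem_of_card_lt_card card_missing_lt
  refine ⟨univ.image x, card_image_le.trans_eq (card_fin t), fun i hi ↦ ?_⟩
  by_contra! h
  exact hx (mem_biUnion.2 ⟨i, hi, Fintype.mem_piFinset.2 fun j ↦
    mem_filter.2 ⟨mem_univ _, h _ (mem_image_of_mem x (mem_univ j))⟩⟩)

end UnionBound

section Counting

variable {U : Type*} [Fintype U]

theorem card_filter_card_le_le_pow (k : ℕ) :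
    #{A : Finset U | #A ≤ k} ≤ (Fintype.card U + 1) ^ k := by
  classical
  have subset_biUnion : ({A : Finset U | #A ≤ k} : Finset (Finset U)) ⊆
      (range (k + 1)).biUnion fun i ↦ powersetCard i univ := fun A hA ↦ by
    simpa [Nat.lt_succ_iff] using hA
  calc #{A : Finset U | #A ≤ k}
      ≤ ∑ i ∈ range (k + 1), #(powersetCard i (univ : Finset U)) :=
        (card_le_card subset_biUnion).trans card_biUnion_le
    _ ≤ ∑ i ∈ range (k + 1), Fintype.card U ^ i * k.choose i := by
        refine sum_le_sum fun i hi ↦ ?_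
        rw [card_powersetCard]
        exact (Nat.choose_le_pow _ _).trans
          (Nat.le_mul_of_pos_right _ (Nat.choose_pos (mem_range_succ_iff.1 hi)))
    _ = (Fintype.card U + 1) ^ k := by simp [add_pow]

variable [DecidableEq U] {κ : Type*} [Fintype κ] [DecidableEq κ] {A B : Finset U}

theorem card_colorings_eq_on_ne_on (c : κ) (hAB : Disjoint A B) :
    (#{f : U → κ | (∀ u ∈ A, f u = c) ∧ ∀ u ∈ B, f u ≠ c} : ℝ) =
      (Fintype.card κ : ℝ)⁻¹ ^ #A * (1 - (Fintype.card κ : ℝ)⁻¹) ^ #B *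
        Fintype.card (U → κ) := by
  have card_ne_zero : (Fintype.card κ : ℝ) ≠ 0 := mod_cast (Fintype.card_pos_iff.2 ⟨c⟩).ne'
  let allowed (u : U) : Finset κ := if u ∈ A then {c} else if u ∈ B then {c}ᶜ else univ
  have filter_eq : ({f : U → κ | (∀ u ∈ A, f u = c) ∧ ∀ u ∈ B, f u ≠ c} : Finset (U → κ)) =
      Fintype.piFinset allowed := by
    ext f
    simp only [mem_filter, mem_univ, true_and, Fintype.mem_piFinset, ← forall_and]
    refine forall_congr' fun u ↦ ?_
    have notMem_B : u ∈ A → u ∉ B := fun hu ↦ disjoint_left.1 hAB hu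
    by_cases hA : u ∈ A <;> by_cases hB : u ∈ B <;> simp_all [allowed]
  have card_compl_singleton : (#({c}ᶜ : Finset κ) : ℝ) = Fintype.card κ - 1 := by
    rw [card_compl, card_singleton, Nat.cast_pred (Fintype.card_pos_iff.2 ⟨c⟩)]
  have card_allowed (u : U) : (#(allowed u) : ℝ) =
      (if u ∈ A then (Fintype.card κ : ℝ)⁻¹ else 1) *
        (if u ∈ B then 1 - (Fintype.card κ : ℝ)⁻¹ else 1) * Fintype.card κ := by
    have notMem_B : u ∈ A → u ∉ B := fun hu ↦ disjoint_left.1 hAB hu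
    by_cases hA : u ∈ A <;> by_cases hB : u ∈ B <;>
      simp_all [allowed, sub_mul]
  rw [filter_eq, Fintype.card_piFinset, Nat.cast_prod]
  simp_rw [card_allowed, prod_mul_distrib, prod_ite_mem, prod_const]
  simp

theorem inv_pow_mul_card_le_card_colorings {a b : ℕ} (c : κ) (hκ : Fintype.card κ = a + b + 1)
    (hAB : Disjoint A B) (hA : #A ≤ a) (hB : #B ≤ b) :
    ((a + b + 1 : ℝ) ^ (a + 1))⁻¹ * Fintype.card (U → κ) ≤
      #{f : U → κ | (∀ u ∈ A, f u = c) ∧ ∀ u ∈ B, f u ≠ c} := by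
  rw [card_colorings_eq_on_ne_on c hAB, hκ]
  push_cast
  set q : ℝ := (a + b + 1 : ℝ)⁻¹ with hq
  have q_nonneg : 0 ≤ q := by positivity
  have q_le_one : q ≤ 1 := inv_le_one_of_one_le₀ (le_add_of_nonneg_left (by positivity))
  have one_sub_q_nonneg : 0 ≤ 1 - q := sub_nonneg.2 q_le_one
  have q_le_one_sub_pow : q ≤ (1 - q) ^ b :=
    calc q ≤ (a + 1) * q := le_mul_of_one_le_left q_nonneg (le_add_of_nonneg_left a.cast_nonneg)
      _ = 1 + b * -q := by linarith [inv_mul_cancel₀ (by positivity : (a + b + 1 : ℝ) ≠ 0)]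
      _ ≤ (1 + -q) ^ b := one_add_mul_le_pow (by linarith) b
      _ = (1 - q) ^ b := by rw [← sub_eq_add_neg]
  rw [← inv_pow, ← hq, pow_succ]
  gcongr ?_ * ?_ * _
  · exact pow_le_pow_of_le_one q_nonneg q_le_one hA
  · exact q_le_one_sub_pow.trans (pow_le_pow_of_le_one one_sub_q_nonneg (sub_le_self 1 q_nonneg) hB)

end Counting

/-- An `(a, b)`-splitter: a family `F` of subsets of `U` such that any two disjoint sets of sizes at
most `a` and `b` are separated by a member of `F`, which contains the first and avoids the second.
Sizes are measured by `Set.ncard`, so the notion is meant for finite `U` only. -/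
def IsSplitterFamily {U : Type*} (F : Finset (Set U)) (a b : ℕ) : Prop :=
  ∀ A B : Set U, Disjoint A B → A.ncard ≤ a → B.ncard ≤ b → ∃ S ∈ F, A ⊆ S ∧ B ∩ S = ∅

namespace IsSplitterFamily

variable {U : Type*}

theorem image_compl [DecidableEq (Set U)] {F : Finset (Set U)} {a b : ℕ}
    (hF : IsSplitterFamily F a b) : IsSplitterFamily (F.image compl) b a := by
  intro A B hAB hA hB
  obtain ⟨S, hS, hBS, hAS⟩ := hF B A hAB.symm hB hA
  refine ⟨Sᶜ, mem_image_of_mem _ hS, ?_, ?_⟩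
  · rwa [Set.subset_compl_iff_disjoint_right, Set.disjoint_iff_inter_eq_empty]
  · rwa [← Set.sdiff_eq, Set.sdiff_eq_empty]

theorem singleton_empty [Finite U] (b : ℕ) : IsSplitterFamily ({∅} : Finset (Set U)) 0 b := by
  intro A B _ hA _
  have A_eq_empty : A = ∅ := (Set.ncard_eq_zero A.toFinite).1 (Nat.le_zero.1 hA)
  exact ⟨∅, mem_singleton_self ∅, A_eq_empty.subset, Set.inter_empty B⟩

end IsSplitterFamily

section Existence

variable (U : Type*) [Fintype U]

/-- The pairs that an `(a, b)`-splitter has to separate, as a finite set over which the union bound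
is taken. -/
def boundedDisjointPairs [DecidableEq U] (a b : ℕ) : Finset (Finset U × Finset U) :=
  {P | Disjoint P.1 P.2 ∧ #P.1 ≤ a ∧ #P.2 ≤ b}

theorem card_boundedDisjointPairs_lt_exp [DecidableEq U] (a b : ℕ) (hU : 2 ≤ Fintype.card U) :
    (#(boundedDisjointPairs U a b) : ℝ) <
      Real.exp (2 * (a + b + 1) * Nat.clog 2 (Fintype.card U)) := by
  set n := Fintype.card U
  set L := Nat.clog 2 n
  have L_pos : 0 < L := Nat.clog_pos one_lt_two hU
  have subset_product : boundedDisjointPairs U a b ⊆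
      ({A : Finset U | #A ≤ a} : Finset _) ×ˢ ({B : Finset U | #B ≤ b} : Finset _) := fun P hP ↦ by
    simp_all [boundedDisjointPairs]
  have succ_le : n + 1 ≤ 2 ^ (2 * L) := by
    have n_le : n ≤ 2 ^ L := Nat.le_pow_clog one_lt_two n
    rw [two_mul, pow_add]
    nlinarith
  have card_le : #(boundedDisjointPairs U a b) ≤ 2 ^ (2 * (a + b + 1) * L) :=
    calc #(boundedDisjointPairs U a b)
        ≤ #{A : Finset U | #A ≤ a} * #{B : Finset U | #B ≤ b} :=
          (card_le_card subset_product).trans_eq (card_product _ _)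
      _ ≤ (n + 1) ^ a * (n + 1) ^ b :=
          Nat.mul_le_mul (card_filter_card_le_le_pow a) (card_filter_card_le_le_pow b)
      _ ≤ (n + 1) ^ (a + b + 1) := by
          rw [← pow_add]
          exact Nat.pow_le_pow_right n.succ_pos (a + b).le_succ
      _ ≤ (2 ^ (2 * L)) ^ (a + b + 1) := Nat.pow_le_pow_left succ_le _
      _ = 2 ^ (2 * (a + b + 1) * L) := by rw [← pow_mul]; ring_nf
  calc (#(boundedDisjointPairs U a b) : ℝ)
      ≤ 2 ^ (2 * (a + b + 1) * L) := mod_cast card_le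
    _ < Real.exp 1 ^ (2 * (a + b + 1) * L) :=
        pow_lt_pow_left₀ Real.exp_one_gt_two zero_le_two (by positivity)
    _ = Real.exp (2 * (a + b + 1) * L) := by rw [← Real.exp_nat_mul]; push_cast; ring_nf

theorem exists_isSplitterFamily_card_le (a b : ℕ) (hU : 2 ≤ Fintype.card U) :
    ∃ F : Finset (Set U), #F ≤ 2 * (a + b + 1) ^ (a + 2) * Nat.clog 2 (Fintype.card U) ∧
      IsSplitterFamily F a b := by
  classical
  set L := Nat.clog 2 (Fintype.card U)
  let splits (f : U → Fin (a + b + 1)) (P : Finset U × Finset U) : Prop :=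
    (∀ u ∈ P.1, f u = 0) ∧ ∀ u ∈ P.2, f u ≠ 0
  have exponent_eq : ((a + b + 1 : ℝ) ^ (a + 1))⁻¹ *
      (2 * (a + b + 1) ^ (a + 2) * L : ℕ) = 2 * (a + b + 1) * L := by
    push_cast
    rw [pow_succ _ (a + 1)]
    field_simp
  obtain ⟨F, card_F, hF⟩ := exists_card_le_forall_exists_of_card_lt_exp splits
    (boundedDisjointPairs U a b)
    (p := ((a + b + 1 : ℝ) ^ (a + 1))⁻¹) (t := 2 * (a + b + 1) ^ (a + 2) * L)
    (fun P hP ↦ by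
      obtain ⟨hdisj, hA, hB⟩ := (mem_filter.1 hP).2
      exact inv_pow_mul_card_le_card_colorings 0 (Fintype.card_fin _) hdisj hA hB)
    (exponent_eq ▸ card_boundedDisjointPairs_lt_exp U a b hU)
  refine ⟨F.image fun f ↦ {u | f u = 0}, card_image_le.trans card_F, fun A B hAB hA hB ↦ ?_⟩
  rw [Set.ncard_eq_toFinset_card'] at hA hB
  obtain ⟨f, hf, f_eq, f_ne⟩ := hF (A.toFinset, B.toFinset)
    (mem_filter.2 ⟨mem_univ _, Set.disjoint_toFinset.2 hAB, hA, hB⟩)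
  refine ⟨_, mem_image_of_mem _ hf, fun u hu ↦ f_eq u (Set.mem_toFinset.2 hu), ?_⟩
  exact Set.eq_empty_of_forall_notMem fun u hu ↦ f_ne u (Set.mem_toFinset.2 hu.1) hu.2

theorem exists_isSplitterFamily_card_le_pow_mul_clog (a b : ℕ) (hU : 2 ≤ Fintype.card U) :
    ∃ F : Finset (Set U), #F ≤ (a + b + 2) ^ (4 * a) * Nat.clog 2 (Fintype.card U) ∧
      IsSplitterFamily F a b := by
  obtain rfl | ha := a.eq_zero_or_pos
  · refine ⟨{∅}, ?_, .singleton_empty b⟩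
    simpa [Nat.one_le_iff_ne_zero] using (Nat.clog_pos one_lt_two hU).ne'
  obtain ⟨F, card_F, hF⟩ := exists_isSplitterFamily_card_le U a b hU
  refine ⟨F, card_F.trans (Nat.mul_le_mul_right _ ?_), hF⟩
  calc 2 * (a + b + 1) ^ (a + 2)
      ≤ (a + b + 2) * (a + b + 2) ^ (a + 2) := by gcongr <;> omega
    _ = (a + b + 2) ^ (a + 3) := by ring
    _ ≤ (a + b + 2) ^ (4 * a) := Nat.pow_le_pow_right (by omega) (by omega)

theorem exists_splitter_family_general (a b : ℕ) (hU : 2 ≤ Fintype.card U) :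
    ∃ F : Finset (Set U),
      #F ≤ (a + b + 2) ^ (4 * min a b) * Nat.clog 2 (Fintype.card U) ∧
        IsSplitterFamily F a b := by
  classical
  obtain hab | hba := le_total a b
  · rw [min_eq_left hab]
    exact exists_isSplitterFamily_card_le_pow_mul_clog U a b hU
  · obtain ⟨F, card_F, hF⟩ := exists_isSplitterFamily_card_le_pow_mul_clog U b a hU
    rw [min_eq_right hba, add_comm a b]
    exact ⟨F.image compl, card_image_le.trans card_F, hF.image_compl⟩

end Existence

/-- the splitter/color-coding lemma of Chitnis et al. (existential form).
There is a constant `c > 0` such that for every finite set `U` with `|U| = n ≥ 2`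
and all `a, b ≤ n` there is a family `F` of subsets of `U` of size at most
`(a+b+2)^(c·min(a,b)) · ⌈log₂ n⌉` such that every pair of disjoint sets
`A, B ⊆ U` with `|A| ≤ a` and `|B| ≤ b` is split by some `S ∈ F`
(`A ⊆ S` and `B ∩ S = ∅`). -/
theorem exists_splitter_family :
    ∃ c : ℕ, 0 < c ∧
      ∀ (U : Type) [Fintype U], ∀ a b : ℕ,
        2 ≤ Fintype.card U → a ≤ Fintype.card U → b ≤ Fintype.card U →
        ∃ F : Finset (Set U),
          F.card ≤ (a + b + 2) ^ (c * min a b) * Nat.clog 2 (Fintype.card U) ∧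
          ∀ A B : Set U, Disjoint A B → A.ncard ≤ a → B.ncard ≤ b →
            ∃ S ∈ F, A ⊆ S ∧ B ∩ S = ∅ :=
  ⟨4, four_pos, fun U _ a b hU _ _ ↦ exists_splitter_family_general U a b hU⟩
end
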